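/- Let I be a finite index set, m ≥ 1 a natural number, and δ ∈ (0,1] a real number with ln(1/δ) ≤ 2m. Let S and O be pmfs on I with S i > 0 and O i > 0 for every i ∈ I, and let E be a pmf on I with D_KL(E‖S) ≤ 2m. Suppose ∑_{i∈I} S i·exp((2m−1)·(ln((S i)/(O i)))²) ≤ 4m/δ. Then D_KL(E‖O) − D_KL(E‖S) ≤ √(D_KL(E‖S)/(2m−1)) + √((ln(1/δ) + (5/2)·ln m + 8)/(2m−1)); equivalently, D_KL(E‖O) ≤ D_KL(E‖S) + √(D_KL(E‖S)/(2m−1)) + √((ln(1/δ) + (5/2)·ln m + 8)/(2m−1)). -/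

import Mathlib

/-- KL divergence of pmfs on a finite index set:
`D_KL(P‖Q) = ∑_{i : P i > 0} P i · ln(P i / Q i)`. -/
noncomputable def klDiv {I : Type*} [Fintype I] (P Q : I → ℝ) : ℝ :=
  ∑ i ∈ Finset.univ.filter (fun i => 0 < P i), P i * Real.log (P i / Q i)

/-!
The difference `klDiv E O - klDiv E S` is the mean of `log (S / O)` under `E`. By Jensen its square
is at most the mean of `(log (S / O)) ^ 2` under `E`, and the Donsker–Varadhan inequality, applied
to `(2 * m - 1) * (log (S / O)) ^ 2`, moves that mean from `E` to `S` at the price of `klDiv E S`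
plus a logarithmic exponential moment under `S`. The hypothesis bounds this moment by
`log (4 * m / δ)`.
-/

theorem sqrt_add_le_sqrt_add_sqrt (a b : ℝ) : √(a + b) ≤ √a + √b := by
  refine Real.sqrt_le_iff.mpr ⟨by positivity, ?_⟩
  calc a + b ≤ √a ^ 2 + √b ^ 2 := by
        rw [Real.sq_sqrt', Real.sq_sqrt']
        exact add_le_add (le_max_left a 0) (le_max_left b 0)
    _ ≤ (√a + √b) ^ 2 := by
        linarith [add_sq √a √b, mul_nonneg (Real.sqrt_nonneg a) (Real.sqrt_nonneg b)]

/-- The Fenchel–Young inequality for the convex function `p ↦ p * log (p / q)`. -/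
theorem mul_le_mul_log_div_add_mul_exp_sub {p q : ℝ} (hp : 0 ≤ p) (hq : 0 < q) (x : ℝ) :
    p * x ≤ p * Real.log (p / q) + q * Real.exp x - p := by
  rcases hp.eq_or_lt with rfl | hp
  · simpa only [zero_mul, zero_add, sub_zero] using (by positivity : 0 ≤ q * Real.exp x)
  have hlog : Real.log (q * Real.exp x / p) = x - Real.log (p / q) := by
    rw [Real.log_div (by positivity) hp.ne', Real.log_mul hq.ne' (Real.exp_ne_zero x),
      Real.log_exp, Real.log_div hp.ne' hq.ne']
    ring
  have htangent : x - Real.log (p / q) ≤ q * Real.exp x / p - 1 :=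
    hlog ▸ Real.log_le_sub_one_of_pos (by positivity)
  have hmul : p * (q * Real.exp x / p - 1) = q * Real.exp x - p := by
    field_simp
  linarith [mul_le_mul_of_nonneg_left htangent hp.le]

section klDiv

variable {I : Type*} [Fintype I] {P Q R : I → ℝ}

theorem klDiv_eq_sum (hP : ∀ i, 0 ≤ P i) :
    klDiv P Q = ∑ i, P i * Real.log (P i / Q i) :=
  Finset.sum_filter_of_ne fun i _ hi => (hP i).lt_of_ne' (left_ne_zero_of_mul hi)

theorem klDiv_sub_klDiv_eq_sum (hP : ∀ i, 0 ≤ P i) (hQ : ∀ i, Q i ≠ 0) (hR : ∀ i, R i ≠ 0) :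
    klDiv P R - klDiv P Q = ∑ i, P i * Real.log (Q i / R i) := by
  rw [klDiv_eq_sum hP, klDiv_eq_sum hP, ← Finset.sum_sub_distrib]
  refine Finset.sum_congr rfl fun i _ => ?_
  rcases eq_or_ne (P i) 0 with hPi | hPi
  · simp only [hPi, zero_mul, sub_zero]
  · rw [Real.log_div hPi (hR i), Real.log_div hPi (hQ i), Real.log_div (hQ i) (hR i)]
    ring

theorem sum_mul_exp_pos [Nonempty I] (hQ : ∀ i, 0 < Q i) (f : I → ℝ) :
    0 < ∑ i, Q i * Real.exp (f i) :=
  Finset.sum_pos (fun i _ => mul_pos (hQ i) (Real.exp_pos _)) Finset.univ_nonempty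

/-- The Donsker–Varadhan inequality. -/
theorem sum_mul_le_klDiv_add_log_sum_mul_exp (hP : ∀ i, 0 ≤ P i) (hP1 : ∑ i, P i = 1)
    (hQ : ∀ i, 0 < Q i) (f : I → ℝ) :
    ∑ i, P i * f i ≤ klDiv P Q + Real.log (∑ i, Q i * Real.exp (f i)) := by
  set Z := ∑ i, Q i * Real.exp (f i) with hZ
  have : Nonempty I :=
    Finset.univ_nonempty_iff.mp (Finset.nonempty_of_sum_ne_zero (hP1 ▸ one_ne_zero))
  have hZpos : 0 < Z := sum_mul_exp_pos hQ f
  -- Shifting `f` by `log Z` gives the tilted weights `Q * exp f / Z` total mass one.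
  have htilt : ∑ i, Q i * Real.exp (f i - Real.log Z) = 1 := by
    simp only [Real.exp_sub, Real.exp_log hZpos, ← mul_div_assoc]
    rw [← Finset.sum_div, ← hZ, div_self hZpos.ne']
  have hyoung : ∑ i, P i * (f i - Real.log Z)
      ≤ ∑ i, (P i * Real.log (P i / Q i) + Q i * Real.exp (f i - Real.log Z) - P i) :=
    Finset.sum_le_sum fun i _ => mul_le_mul_log_div_add_mul_exp_sub (hP i) (hQ i) _
  simp only [mul_sub, Finset.sum_sub_distrib, Finset.sum_add_distrib, ← Finset.sum_mul,
    htilt, hP1, ← klDiv_eq_sum hP] at hyoung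
  linarith

theorem klDiv_sub_klDiv_le_sqrt (hP : ∀ i, 0 ≤ P i) (hP1 : ∑ i, P i = 1)
    (hQ : ∀ i, 0 < Q i) (hR : ∀ i, R i ≠ 0) {k : ℝ} (hk : 0 < k) :
    klDiv P R - klDiv P Q
      ≤ √((klDiv P Q + Real.log (∑ i, Q i * Real.exp (k * Real.log (Q i / R i) ^ 2))) / k) := by
  refine Real.le_sqrt_of_sq_le ((le_div_iff₀' hk).mpr ?_)
  calc k * (klDiv P R - klDiv P Q) ^ 2
      = k * (∑ i, P i * Real.log (Q i / R i)) ^ 2 := by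
        rw [klDiv_sub_klDiv_eq_sum hP (fun i => (hQ i).ne') hR]
    _ ≤ k * ∑ i, P i * Real.log (Q i / R i) ^ 2 := by
        gcongr
        exact Real.pow_arith_mean_le_arith_mean_pow_of_even _ _ _ (fun i _ => hP i) hP1 even_two
    _ = ∑ i, P i * (k * Real.log (Q i / R i) ^ 2) := by
        simp only [Finset.mul_sum, mul_left_comm]
    _ ≤ _ := sum_mul_le_klDiv_add_log_sum_mul_exp hP hP1 hQ _

theorem klDiv_sub_klDiv_le_sqrt_add_sqrt (hP : ∀ i, 0 ≤ P i) (hP1 : ∑ i, P i = 1)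
    (hQ : ∀ i, 0 < Q i) (hR : ∀ i, R i ≠ 0) {k c : ℝ} (hk : 0 < k)
    (hc : Real.log (∑ i, Q i * Real.exp (k * Real.log (Q i / R i) ^ 2)) ≤ c) :
    klDiv P R - klDiv P Q ≤ √(klDiv P Q / k) + √(c / k) :=
  calc klDiv P R - klDiv P Q
      ≤ √((klDiv P Q + Real.log (∑ i, Q i * Real.exp (k * Real.log (Q i / R i) ^ 2))) / k) :=
        klDiv_sub_klDiv_le_sqrt hP hP1 hQ hR hk
    _ ≤ √(klDiv P Q / k + c / k) := by
        rw [← add_div]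
        gcongr
    _ ≤ √(klDiv P Q / k) + √(c / k) := sqrt_add_le_sqrt_add_sqrt _ _

end klDiv

theorem log_four_mul_div_le {m δ : ℝ} (hm : 1 / 2 < m) (hδ : 0 < δ) :
    Real.log (4 * m / δ) ≤ Real.log (1 / δ) + 5 / 2 * Real.log m + 8 := by
  have hm0 : 0 < m := by linarith
  have hlog : Real.log (4 * m / δ) = Real.log (1 / δ) + Real.log 4 + Real.log m := by
    rw [div_eq_mul_one_div, Real.log_mul (by positivity) (by positivity),
      Real.log_mul four_ne_zero hm0.ne']
    ring
  have hlog4 : Real.log 4 ≤ 4 - 1 := Real.log_le_sub_one_of_pos four_pos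
  have hinv : m⁻¹ ≤ 2 := inv_le_of_inv_le₀ two_pos (by linarith)
  linarith [Real.one_sub_inv_le_log_of_pos hm0]

theorem open_environment_joint_distribution_bound_general
    {I : Type*} [Fintype I] {m δ : ℝ} (hm : 1 / 2 < m) (hδ : 0 < δ) {S O E : I → ℝ}
    (hS : ∀ i, 0 < S i) (hO : ∀ i, 0 < O i) (hE : ∀ i, 0 ≤ E i) (hE1 : ∑ i, E i = 1)
    (hev : ∑ i, S i * Real.exp ((2 * m - 1) * Real.log (S i / O i) ^ 2) ≤ 4 * m / δ) :
    klDiv E O - klDiv E S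
      ≤ √(klDiv E S / (2 * m - 1))
        + √((Real.log (1 / δ) + 5 / 2 * Real.log m + 8) / (2 * m - 1)) := by
  have : Nonempty I :=
    Finset.univ_nonempty_iff.mp (Finset.nonempty_of_sum_ne_zero (hE1 ▸ one_ne_zero))
  have hmoment : Real.log (∑ i, S i * Real.exp ((2 * m - 1) * Real.log (S i / O i) ^ 2))
      ≤ Real.log (1 / δ) + 5 / 2 * Real.log m + 8 :=
    (Real.log_le_log (sum_mul_exp_pos hS _) hev).trans (log_four_mul_div_le hm hδ)
  exact klDiv_sub_klDiv_le_sqrt_add_sqrt hE hE1 hS (fun i => (hO i).ne') (by linarith) hmoment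

/-- Deterministic form of Theorem 1: on the high-probability event,
`D_KL(E‖O) − D_KL(E‖S) ≤ √(D_KL(E‖S)/(2m−1)) + √((ln(1/δ)+(5/2)ln m+8)/(2m−1))`,
equivalently `D_KL(E‖O) ≤ D_KL(E‖S) + √(D_KL(E‖S)/(2m−1)) + √((ln(1/δ)+(5/2)ln m+8)/(2m−1))`. -/
theorem open_environment_joint_distribution_bound
    {I : Type*} [Fintype I]
    (m : ℕ) (hm : 1 ≤ m)
    (δ : ℝ) (hδ0 : 0 < δ) (hδ1 : δ ≤ 1) (hδm : Real.log (1 / δ) ≤ 2 * (m : ℝ))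
    (S O E : I → ℝ)
    (hS0 : ∀ i, 0 < S i) (hS1 : ∑ i, S i = 1)
    (hO0 : ∀ i, 0 < O i) (hO1 : ∑ i, O i = 1)
    (hE0 : ∀ i, 0 ≤ E i) (hE1 : ∑ i, E i = 1)
    (hKL : klDiv E S ≤ 2 * (m : ℝ))
    (hev : ∑ i, S i * Real.exp ((2 * (m : ℝ) - 1) * (Real.log (S i / O i)) ^ 2)
      ≤ 4 * (m : ℝ) / δ) :
    klDiv E O - klDiv E S
      ≤ Real.sqrt (klDiv E S / (2 * (m : ℝ) - 1))
        + Real.sqrt ((Real.log (1 / δ) + (5 / 2) * Real.log m + 8) / (2 * (m : ℝ) - 1))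
    ∧ klDiv E O
      ≤ klDiv E S + Real.sqrt (klDiv E S / (2 * (m : ℝ) - 1))
        + Real.sqrt ((Real.log (1 / δ) + (5 / 2) * Real.log m + 8) / (2 * (m : ℝ) - 1)) := by
  have hm' : (1 / 2 : ℝ) < m := one_half_lt_one.trans_le (by exact_mod_cast hm)
  have hdiff := open_environment_joint_distribution_bound_general hm' hδ0 hS0 hO0 hE0 hE1 hev
  exact ⟨hdiff, by linarith⟩
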